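/- Let A ⊆ F_p with 2 ≤ |A| < p^{1/2} and 0 ∉ A. Then max(|A+A|, |AA|) ≥ c·|A|^{14/13} / (log|A|)^α for absolute constants c > 0 and α ≥ 0. -/

import Mathlib

open Finset Pointwise

/-!
The multiplicative energy of `A` is at least `|A|⁴ / |AA|`, so by pigeonhole there are `b ∈ A`, a
threshold `N` and a set `A₁ ⊆ A` of dilates with `|aA ∩ bA| ≥ N` for `a ∈ A₁`, such that `N |A₁|` is
at least `|A|² / |AA|` up to a logarithm. The triangle inequality through `aA ∩ bA` makes each
`bA ± aA` with `a ∈ A₁` small, so by Plünnecke's inequality with pivot `bA` every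
`(b₁ - b₂)A₁ + (a₁ - a₂)A₁` with `aᵢ, bᵢ ∈ A₁` is small.

In the opposite direction, put `R = (A₁ - A₁) / (A₁ - A₁)`. If `R` is closed under
`ξ ↦ ξ + 1`, it contains `0, 1, …, |A₁|² - 1`, which are distinct since the characteristic is `0` or
at least `|A|²`, and an average `ξ` among them satisfies `|A₁ + ξA₁| ≥ |A₁|² / 2`. Otherwise some
`ξ ∈ R` has `ξ + 1 ∉ R`; then `(x, y) ↦ x + (ξ + 1)y` is injective on `A₁ × A₁`, so
`A₁ + A₁ + ξA₁` is large, and Plünnecke's inequality bounds `|A₁ + ξA₁|` from below.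
-/

section Plunnecke

variable {G : Type*} [AddCommGroup G] [DecidableEq G] {X : Finset G}

theorem exists_subset_card_add_mul_card_le {M : Type*} [Add M] [DecidableEq M] {X : Finset M}
    (hX : X.Nonempty) (B : Finset M) :
    ∃ U ⊆ X, U.Nonempty ∧ ∀ V ⊆ X, #(U + B) * #V ≤ #(V + B) * #U := by
  obtain ⟨U, hU, hmin⟩ := exists_min_image (X.powerset.erase ∅)
    (fun V ↦ (#(V + B) / #V : ℚ)) ⟨X, by simp [hX.ne_empty]⟩
  rw [mem_erase, mem_powerset, ← nonempty_iff_ne_empty] at hU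
  refine ⟨U, hU.2, hU.1, fun V hVX ↦ ?_⟩
  obtain rfl | hV := V.eq_empty_or_nonempty
  · simp
  have hU_pos : (0 : ℚ) < #U := mod_cast hU.1.card_pos
  have hV_pos : (0 : ℚ) < #V := mod_cast hV.card_pos
  have hratio := hmin V (by simp [hVX, hV.ne_empty])
  rw [div_le_div_iff₀ hU_pos hV_pos] at hratio
  exact mod_cast hratio

theorem exists_subset_card_add_add_self_mul_le (hX : X.Nonempty) (D : Finset G) :
    ∃ U ⊆ X, U.Nonempty ∧ #(U + D + D) * #X ^ 2 ≤ #(X + D) ^ 2 * #U := by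
  obtain ⟨U, hUX, hU, hmin⟩ := exists_subset_card_add_mul_card_le hX D
  refine ⟨U, hUX, hU, ?_⟩
  have hpetridis : #(U + D + D) * #U ≤ #(U + D) ^ 2 := by
    have h := pluennecke_petridis_inequality_add D fun V hV ↦ hmin V (hV.trans hUX)
    rwa [add_comm D U, ← sq] at h
  refine Nat.le_of_mul_le_mul_right ?_ hU.card_pos
  calc #(U + D + D) * #X ^ 2 * #U = #(U + D + D) * #U * #X ^ 2 := by ring
    _ ≤ #(U + D) ^ 2 * #X ^ 2 := by gcongr
    _ = (#(U + D) * #X) ^ 2 := by ring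
    _ ≤ (#(X + D) * #U) ^ 2 := Nat.pow_le_pow_left (hmin X subset_rfl) 2
    _ = #(X + D) ^ 2 * #U * #U := by ring

theorem exists_finset_card_add_eq_mul (t s : ℕ) :
    ∃ T S : Finset (ℤ × ℤ), #T = t ∧ #S = s ∧ #(T + S) = t * s := by
  refine ⟨Ico 0 (t : ℤ) ×ˢ {0}, {0} ×ˢ Ico 0 (s : ℤ), by simp, by simp, ?_⟩
  rw [product_add_product_comm]
  simp

/- Plünnecke's inequality for one repeated summand is applied to `D = B × T ∪ C × S` inside
`G × ℤ × ℤ`, where `|T| = |X + C|` and `|S| = |X + B|` balance the two parts of `X × {0} + D`. -/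
theorem exists_subset_card_add_add_mul_le (hX : X.Nonempty) {B C : Finset G}
    (hB : B.Nonempty) (hC : C.Nonempty) :
    ∃ U ⊆ X, U.Nonempty ∧ #(U + B + C) * #X ^ 2 ≤ 4 * #(X + B) * #(X + C) * #U := by
  obtain ⟨T, S, hT, hS, hTS⟩ := exists_finset_card_add_eq_mul #(X + C) #(X + B)
  set D : Finset (G × ℤ × ℤ) := B ×ˢ T ∪ C ×ˢ S with hD
  obtain ⟨V, hVX, hV, hVD⟩ :=
    exists_subset_card_add_add_self_mul_le (hX.product (singleton_nonempty (0 : ℤ × ℤ))) D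
  obtain ⟨U, hUX, rfl⟩ : ∃ U ⊆ X, V = U ×ˢ {0} := by
    simpa only [product_singleton, subset_map_iff] using hVX
  refine ⟨U, hUX, by simpa using hV, ?_⟩
  have hupper : #(X ×ˢ {0} + D) ≤ 2 * (#(X + B) * #(X + C)) := by
    rw [hD, add_union, product_add_product_comm, product_add_product_comm]
    refine (card_union_le _ _).trans_eq ?_
    rw [singleton_zero, zero_add, zero_add, card_product, card_product, hT, hS]
    ring
  have hlower : #(U + B + C) * (#(X + C) * #(X + B)) ≤ #(U ×ˢ {0} + D + D) := by
    rw [← hTS, ← card_product]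
    refine card_le_card ?_
    calc (U + B + C) ×ˢ (T + S) = U ×ˢ {0} + B ×ˢ T + C ×ˢ S := by
          rw [product_add_product_comm, product_add_product_comm, singleton_zero, zero_add]
      _ ⊆ U ×ˢ {0} + D + D :=
          add_subset_add (add_subset_add_left subset_union_left) subset_union_right
  rw [card_product, card_product, card_singleton, mul_one, mul_one] at hVD
  have hpos : 0 < #(X + C) * #(X + B) := Nat.mul_pos (hX.add hC).card_pos (hX.add hB).card_pos
  refine Nat.le_of_mul_le_mul_right ?_ hpos
  calc #(U + B + C) * #X ^ 2 * (#(X + C) * #(X + B))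
      = #(U + B + C) * (#(X + C) * #(X + B)) * #X ^ 2 := by ring
    _ ≤ #(U ×ˢ {0} + D + D) * #X ^ 2 := by gcongr
    _ ≤ #(X ×ˢ {0} + D) ^ 2 * #U := hVD
    _ ≤ (2 * (#(X + B) * #(X + C))) ^ 2 * #U := by gcongr
    _ = 4 * #(X + B) * #(X + C) * #U * (#(X + C) * #(X + B)) := by ring

theorem card_nsmul_mul_card_pow_le (hX : X.Nonempty) (B : Finset G) (n : ℕ) :
    #(n • B) * #X ^ n ≤ #(X + B) ^ n * #X := by
  have h := pluennecke_ruzsa_inequality_nsmul_add hX B n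
  rw [div_pow, div_mul_eq_mul_div, le_div_iff₀ (pow_pos (mod_cast hX.card_pos) n)] at h
  exact mod_cast h

theorem sum_subset_card_nsmul_biUnion {ι M : Type*} [AddCommMonoid M] [DecidableEq M]
    (s : Finset ι) (B : ι → Finset M) :
    ∑ i ∈ s, B i ⊆ #s • s.biUnion B := by
  rw [← coe_subset, coe_sum, coe_nsmul, ← sum_const]
  exact Set.finsetSum_subset_finsetSum _ _ _ fun i hi ↦ coe_subset.2 (subset_biUnion_of_mem B hi)

theorem card_add_biUnion_le {ι M : Type*} [Add M] [DecidableEq M] (X : Finset M) (s : Finset ι)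
    (B : ι → Finset M) :
    #(X + s.biUnion B) ≤ ∑ i ∈ s, #(X + B i) := by
  refine (card_le_card ?_).trans card_biUnion_le
  simp only [add_subset_iff, mem_biUnion]
  rintro x hx y ⟨i, hi, hy⟩
  exact ⟨i, hi, add_mem_add hx hy⟩

theorem card_sum_mul_card_pow_le {ι : Type*} (hX : X.Nonempty) (s : Finset ι)
    (B : ι → Finset G) :
    #(∑ i ∈ s, B i) * #X ^ #s ≤ (∑ i ∈ s, #(X + B i)) ^ #s * #X :=
  calc #(∑ i ∈ s, B i) * #X ^ #s
      ≤ #(#s • s.biUnion B) * #X ^ #s := by gcongr; exact sum_subset_card_nsmul_biUnion s B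
    _ ≤ #(X + s.biUnion B) ^ #s * #X := card_nsmul_mul_card_pow_le hX _ _
    _ ≤ (∑ i ∈ s, #(X + B i)) ^ #s * #X := by
        gcongr
        exact card_add_biUnion_le X s B

theorem card_add_mul_card_inter_le (X Y : Finset G) :
    #(X + Y) * #(X ∩ Y) ≤ #(X + X) * #(Y + Y) :=
  calc #(X + Y) * #(X ∩ Y) ≤ #(X + X ∩ Y) * #(X ∩ Y + Y) :=
        ruzsa_triangle_inequality_add_add_add X (X ∩ Y) Y
    _ ≤ #(X + X) * #(Y + Y) := by
        gcongr
        exacts [inter_subset_left, inter_subset_right]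

theorem card_sub_mul_card_inter_le (X Y : Finset G) :
    #(X - Y) * #(X ∩ Y) ≤ #(X + X) * #(Y + Y) :=
  calc #(X - Y) * #(X ∩ Y) ≤ #(X + X ∩ Y) * #(Y + X ∩ Y) :=
        ruzsa_triangle_inequality_sub_add_add X (X ∩ Y) Y
    _ ≤ #(X + X) * #(Y + Y) := by
        gcongr
        exacts [inter_subset_left, inter_subset_right]

end Plunnecke

section Averaging

variable {ι α β : Type*} [DecidableEq β]

theorem card_filter_apply_eq_apply (s : Finset α) (f : α → β) :
    #{q ∈ s ×ˢ s | f q.1 = f q.2} = ∑ b ∈ s.image f, #{a ∈ s | f a = b} ^ 2 := by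
  have hmaps : ∀ q ∈ ({q ∈ s ×ˢ s | f q.1 = f q.2} : Finset _), f q.1 ∈ s.image f :=
    fun q hq ↦ mem_image_of_mem f (mem_product.1 (mem_filter.1 hq).1).1
  rw [card_eq_sum_card_fiberwise hmaps]
  refine sum_congr rfl fun b _ ↦ ?_
  rw [sq, ← card_product]
  congr 1
  grind

theorem sq_card_le_card_image_mul_card_filter (s : Finset α) (f : α → β) :
    #s ^ 2 ≤ #(s.image f) * #{q ∈ s ×ˢ s | f q.1 = f q.2} := by
  rw [card_filter_apply_eq_apply, card_eq_sum_card_image f s]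
  exact sq_sum_le_card_mul_sum_sq

theorem sum_card_filter_apply_eq_apply_le {s : Finset α} {T : Finset ι} {f : ι → α → β}
    (hf : ∀ x ∈ s, ∀ y ∈ s, x ≠ y → #{i ∈ T | f i x = f i y} ≤ 1) :
    ∑ i ∈ T, #{q ∈ s ×ˢ s | f i q.1 = f i q.2} ≤ #s * #T + #s ^ 2 := by
  classical
  calc ∑ i ∈ T, #{q ∈ s ×ˢ s | f i q.1 = f i q.2}
      = ∑ q ∈ s ×ˢ s, #{i ∈ T | f i q.1 = f i q.2} :=
        sum_card_bipartiteAbove_eq_sum_card_bipartiteBelow fun i (q : α × α) ↦ f i q.1 = f i q.2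
    _ ≤ ∑ q ∈ s ×ˢ s, ((if q.1 = q.2 then #T else 0) + 1) := by
        refine sum_le_sum fun q hq ↦ ?_
        obtain ⟨hq₁, hq₂⟩ := mem_product.1 hq
        split_ifs with h
        · exact (card_filter_le _ _).trans (Nat.le_succ _)
        · simpa using hf _ hq₁ _ hq₂ h
    _ = #s * #T + #s ^ 2 := by
        rw [sum_add_distrib, sum_product]
        simp [sq]

theorem exists_card_le_two_mul_card_image {s : Finset α} {T : Finset ι} {f : ι → α → β}
    (hs : s.Nonempty) (hsT : #s ≤ #T)
    (hf : ∀ x ∈ s, ∀ y ∈ s, x ≠ y → #{i ∈ T | f i x = f i y} ≤ 1) :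
    ∃ i ∈ T, #s ≤ 2 * #(s.image (f i)) := by
  have hs_pos := hs.card_pos
  obtain ⟨i, hi, hcollisions⟩ : ∃ i ∈ T, #{q ∈ s ×ˢ s | f i q.1 = f i q.2} ≤ 2 * #s := by
    refine exists_le_of_sum_le (card_pos.1 (hs_pos.trans_le hsT)) ?_
    calc ∑ i ∈ T, #{q ∈ s ×ˢ s | f i q.1 = f i q.2}
        ≤ #s * #T + #s ^ 2 := sum_card_filter_apply_eq_apply_le hf
      _ ≤ #s * #T + #s * #T := by rw [sq]; gcongr
      _ = ∑ _i ∈ T, 2 * #s := by rw [sum_const, smul_eq_mul]; ring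
  refine ⟨i, hi, Nat.le_of_mul_le_mul_right ?_ hs_pos⟩
  calc #s * #s = #s ^ 2 := (sq _).symm
    _ ≤ #(s.image (f i)) * #{q ∈ s ×ˢ s | f i q.1 = f i q.2} :=
        sq_card_le_card_image_mul_card_filter s (f i)
    _ ≤ #(s.image (f i)) * (2 * #s) := by gcongr
    _ = 2 * #(s.image (f i)) * #s := by ring

theorem sum_eq_sum_range_card_filter_lt {s : Finset α} {f : α → ℕ} {n : ℕ}
    (hf : ∀ a ∈ s, f a ≤ n) :
    ∑ a ∈ s, f a = ∑ i ∈ range n, #{a ∈ s | i < f a} := by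
  refine Eq.trans (sum_congr rfl fun a ha ↦ ?_)
    (sum_card_bipartiteAbove_eq_sum_card_bipartiteBelow fun a i ↦ i < f a)
  have hrange : (range n).bipartiteAbove (fun a i ↦ i < f a) a = range (f a) := by
    have := hf a ha
    ext i
    simp only [mem_bipartiteAbove, mem_range]
    omega
  rw [hrange, card_range]

theorem exists_sum_le_mul_card_filter_mul_one_add_log {s : Finset α} {f : α → ℕ} {n : ℕ}
    (hf : ∀ a ∈ s, f a ≤ n) :
    ∃ N : ℕ, (∑ a ∈ s, f a : ℝ) ≤ N * #{a ∈ s | N ≤ f a} * (1 + Real.log n) := by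
  obtain ⟨N, -, hmax⟩ := exists_max_image (range (n + 1)) (fun i ↦ i * #{a ∈ s | i ≤ f a})
    nonempty_range_add_one
  refine ⟨N, ?_⟩
  set w : ℝ := N * #{a ∈ s | N ≤ f a} with hw
  have hlayer : ∀ i ∈ range n, (#{a ∈ s | i < f a} : ℝ) ≤ w * ((i + 1 : ℕ) : ℝ)⁻¹ := by
    intro i hi
    rw [← div_eq_mul_inv, le_div_iff₀ (by positivity), mul_comm, hw]
    exact mod_cast hmax (i + 1) (by simpa using hi)
  calc (∑ a ∈ s, f a : ℝ) = ∑ i ∈ range n, (#{a ∈ s | i < f a} : ℝ) :=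
        mod_cast sum_eq_sum_range_card_filter_lt hf
    _ ≤ ∑ i ∈ range n, w * ((i + 1 : ℕ) : ℝ)⁻¹ := sum_le_sum hlayer
    _ = w * harmonic n := by rw [← mul_sum, harmonic]; push_cast; rfl
    _ ≤ w * (1 + Real.log n) := by gcongr; exact harmonic_le_one_add_log n

end Averaging

section DistribMulAction

variable {M G : Type*} [Monoid M]

theorem card_smul_add_smul_le [AddMonoid G] [DistribMulAction M G] [DecidableEq G] (a : M)
    (A : Finset G) : #(a • A + a • A) ≤ #(A + A) := by
  rw [← smul_add]
  exact card_smul_finset_le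

variable [AddCommGroup G] [DistribMulAction M G] [DecidableEq G] {A : Finset G} {a b : M} {N : ℕ}

theorem card_smul_add_smul_mul_le (hN : N ≤ #(a • A ∩ b • A)) :
    #(b • A + a • A) * N ≤ #(A + A) ^ 2 :=
  calc #(b • A + a • A) * N ≤ #(b • A + a • A) * #(b • A ∩ a • A) := by
        rw [inter_comm]; gcongr
    _ ≤ #(b • A + b • A) * #(a • A + a • A) := card_add_mul_card_inter_le _ _
    _ ≤ #(A + A) * #(A + A) :=
        Nat.mul_le_mul (card_smul_add_smul_le b A) (card_smul_add_smul_le a A)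
    _ = #(A + A) ^ 2 := (sq _).symm

theorem card_smul_add_neg_smul_mul_le (hN : N ≤ #(a • A ∩ b • A)) :
    #(b • A + -(a • A)) * N ≤ #(A + A) ^ 2 :=
  calc #(b • A + -(a • A)) * N ≤ #(b • A - a • A) * #(b • A ∩ a • A) := by
        rw [inter_comm, ← sub_eq_add_neg]; gcongr
    _ ≤ #(b • A + b • A) * #(a • A + a • A) := card_sub_mul_card_inter_le _ _
    _ ≤ #(A + A) * #(A + A) :=
        Nat.mul_le_mul (card_smul_add_smul_le b A) (card_smul_add_smul_le a A)
    _ = #(A + A) ^ 2 := (sq _).symm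

end DistribMulAction

section Dilates

theorem sub_smul_finset_subset {R M : Type*} [Ring R] [AddCommGroup M] [Module R M]
    [DecidableEq M] (a b : R) (A : Finset M) :
    (a - b) • A ⊆ a • A + -(b • A) := by
  intro z hz
  obtain ⟨x, hx, rfl⟩ := mem_smul_finset.1 hz
  rw [sub_smul, sub_eq_add_neg]
  exact add_mem_add (smul_mem_smul_finset hx) (neg_mem_neg (smul_mem_smul_finset hx))

theorem add_one_smul_finset_subset {R M : Type*} [Semiring R] [AddCommMonoid M] [Module R M]
    [DecidableEq M] (a : R) (A : Finset M) :
    (a + 1) • A ⊆ A + a • A := by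
  intro z hz
  obtain ⟨x, hx, rfl⟩ := mem_smul_finset.1 hz
  rw [add_smul, one_smul, add_comm (a • x)]
  exact add_mem_add hx (smul_mem_smul_finset hx)

theorem image_add_smul_product {M R : Type*} [SMul M R] [Add R] [DecidableEq R] (a : M)
    (A B : Finset R) : (A ×ˢ B).image (fun q ↦ q.1 + a • q.2) = A + a • B := by
  ext z
  simp [mem_add, mem_smul_finset, and_assoc]

theorem exists_sq_card_le_two_mul_card_add_smul {R : Type*} [Ring R] [NoZeroDivisors R]
    [DecidableEq R] {A T : Finset R} (hA : A.Nonempty) (hT : #A ^ 2 ≤ #T) :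
    ∃ ξ ∈ T, #A ^ 2 ≤ 2 * #(A + ξ • A) := by
  have hcard : #(A ×ˢ A) = #A ^ 2 := by rw [card_product, sq]
  have hcollide : ∀ q ∈ A ×ˢ A, ∀ q' ∈ A ×ˢ A, q ≠ q' →
      #{ξ ∈ T | q.1 + ξ • q.2 = q'.1 + ξ • q'.2} ≤ 1 := by
    rintro ⟨x, y⟩ - ⟨x', y'⟩ - hne
    refine card_le_one.2 fun ξ hξ η hη ↦ by_contra fun hξη ↦ hne ?_
    replace hξ : x + ξ * y = x' + ξ * y' := (mem_filter.1 hξ).2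
    replace hη : x + η * y = x' + η * y' := (mem_filter.1 hη).2
    have hmul : (ξ - η) * y = (ξ - η) * y' :=
      calc (ξ - η) * y = x + ξ * y - (x + η * y) := by noncomm_ring
        _ = x' + ξ * y' - (x' + η * y') := by rw [hξ, hη]
        _ = (ξ - η) * y' := by noncomm_ring
    obtain rfl : y = y' := mul_left_cancel₀ (sub_ne_zero.2 hξη) hmul
    rw [add_right_cancel hξ]
  obtain ⟨ξ, hξ, h⟩ :=
    exists_card_le_two_mul_card_image (hA.product hA) (hcard.trans_le hT) hcollide
  exact ⟨ξ, hξ, by rwa [image_add_smul_product, hcard] at h⟩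

theorem mulEnergy_le_sum_card_smul_inter_smul {M : Type*} [MonoidWithZero M]
    [IsLeftCancelMulZero M] [DecidableEq M] {A : Finset M} (h0 : 0 ∉ A) (B : Finset M) :
    mulEnergy A B ≤ ∑ b ∈ A, ∑ a ∈ A, #(a • B ∩ b • B) := by
  rw [mulEnergy, card_filter, sum_product, sum_product_right]
  refine sum_le_sum fun b hb ↦ sum_le_sum fun a ha ↦ ?_
  rw [← card_filter]
  refine card_le_card_of_injOn (fun q ↦ a • q.1) ?_ ?_
  · rintro ⟨x, y⟩ hq
    obtain ⟨hxy, heq⟩ := mem_filter.1 hq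
    obtain ⟨hx, hy⟩ := mem_product.1 hxy
    exact mem_inter.2 ⟨smul_mem_smul_finset hx, mem_smul_finset.2 ⟨y, hy, heq.symm⟩⟩
  · rintro ⟨x, y⟩ hq ⟨x', y'⟩ hq' heq
    obtain rfl : x = x' := mul_left_cancel₀ (ne_of_mem_of_not_mem ha h0) heq
    obtain rfl : y = y' := mul_left_cancel₀ (ne_of_mem_of_not_mem hb h0)
      ((mem_filter.1 hq).2.symm.trans (mem_filter.1 hq').2)
    rfl

theorem exists_card_mul_sq_card_le_card_mul_sum_card_smul_inter_smul {M : Type*}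
    [CommMonoidWithZero M] [IsLeftCancelMulZero M] [DecidableEq M] {A : Finset M}
    (hA : A.Nonempty) (h0 : 0 ∉ A) (B : Finset M) :
    ∃ b ∈ A, #A * #B ^ 2 ≤ #(A * B) * ∑ a ∈ A, #(a • B ∩ b • B) := by
  refine exists_le_of_sum_le hA ?_
  calc ∑ _b ∈ A, #A * #B ^ 2 = #A ^ 2 * #B ^ 2 := by rw [sum_const, smul_eq_mul]; ring
    _ ≤ #(A * B) * mulEnergy A B := le_card_mul_mul_mulEnergy A B
    _ ≤ #(A * B) * ∑ b ∈ A, ∑ a ∈ A, #(a • B ∩ b • B) := by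
        gcongr
        exact mulEnergy_le_sum_card_smul_inter_smul h0 B
    _ = ∑ b ∈ A, #(A * B) * ∑ a ∈ A, #(a • B ∩ b • B) := mul_sum _ _ _

end Dilates

section DifferenceQuotients

variable {F : Type*} [Field F] [DecidableEq F] {A U : Finset F} {ξ : F}

/-- The difference quotients `(a₁ - a₂) / (b₁ - b₂)` of elements of `A`, with `b₁ ≠ b₂`: the
ratios `ξ` for which `(x, y) ↦ x + ξy` may fail to be injective on `A × A`. Zero denominators are
erased so that the junk value `x / 0 = 0` does not enter. -/
def diffQuotients (A : Finset F) : Finset F :=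
  (A - A) / (A - A).erase 0

theorem mem_diffQuotients :
    ξ ∈ diffQuotients A ↔
      ∃ a₁ ∈ A, ∃ a₂ ∈ A, ∃ b₁ ∈ A, ∃ b₂ ∈ A, b₁ ≠ b₂ ∧ (a₁ - a₂) / (b₁ - b₂) = ξ := by
  simp only [diffQuotients, mem_div, mem_erase, mem_sub]
  constructor
  · rintro ⟨_, ⟨a₁, ha₁, a₂, ha₂, rfl⟩, _, ⟨hne, b₁, hb₁, b₂, hb₂, rfl⟩, rfl⟩
    exact ⟨a₁, ha₁, a₂, ha₂, b₁, hb₁, b₂, hb₂, sub_ne_zero.1 hne, rfl⟩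
  · rintro ⟨a₁, ha₁, a₂, ha₂, b₁, hb₁, b₂, hb₂, hne, rfl⟩
    exact ⟨_, ⟨a₁, ha₁, a₂, ha₂, rfl⟩, _, ⟨sub_ne_zero.2 hne, b₁, hb₁, b₂, hb₂, rfl⟩, rfl⟩

theorem zero_mem_diffQuotients (hA : A.Nontrivial) : 0 ∈ diffQuotients A := by
  obtain ⟨x, hx, y, hy, hne⟩ := hA
  exact mem_diffQuotients.2 ⟨x, hx, x, hx, x, hx, y, hy, hne, by simp⟩

theorem card_add_smul_of_notMem_diffQuotients (hUA : U ⊆ A) (hξ : ξ ∉ diffQuotients A) :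
    #(U + ξ • A) = #U * #A := by
  have hinj : Set.InjOn (fun q : F × F ↦ q.1 + ξ • q.2) (U ×ˢ A : Finset (F × F)) := by
    rintro ⟨x, y⟩ hq ⟨x', y'⟩ hq' heq
    obtain ⟨hx, hy⟩ := mem_product.1 hq
    obtain ⟨hx', hy'⟩ := mem_product.1 hq'
    simp only [smul_eq_mul] at heq
    obtain rfl : y = y' := by
      by_contra hne
      refine hξ (mem_diffQuotients.2 ⟨x', hUA hx', x, hUA hx, y, hy, y', hy', hne, ?_⟩)
      rw [div_eq_iff (sub_ne_zero.2 hne)]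
      linear_combination -heq
    rw [add_right_cancel heq]
  rw [← image_add_smul_product, card_image_of_injOn hinj, card_product]

theorem card_pow_three_le_of_add_one_notMem_diffQuotients (hA : A.Nonempty)
    (hξ : ξ + 1 ∉ diffQuotients A) : #A ^ 3 ≤ 4 * #(A + A) * #(A + ξ • A) := by
  obtain ⟨U, hUA, hU, hcard⟩ := exists_subset_card_add_add_mul_le hA hA (hA.smul_finset (a := ξ))
  have hlarge : #U * #A ≤ #(U + A + ξ • A) := by
    rw [← card_add_smul_of_notMem_diffQuotients hUA hξ, add_assoc]
    exact card_le_card (add_subset_add_left (add_one_smul_finset_subset ξ A))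
  refine Nat.le_of_mul_le_mul_right ?_ hU.card_pos
  calc #A ^ 3 * #U = #U * #A * #A ^ 2 := by ring
    _ ≤ #(U + A + ξ • A) * #A ^ 2 := by gcongr
    _ ≤ 4 * #(A + A) * #(A + ξ • A) * #U := hcard

theorem card_image_natCast_range {R : Type*} [AddGroupWithOne R] [DecidableEq R] {p n : ℕ}
    [CharP R p] (hp : p = 0 ∨ n ≤ p) : #((range n).image (Nat.cast : ℕ → R)) = n := by
  rw [card_image_of_injOn, card_range]
  obtain rfl | hnp := hp
  · have := CharP.charP_to_charZero R
    exact Nat.cast_injective.injOn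
  · exact (CharP.natCast_injOn_Iio R p).mono fun i hi ↦ (mem_range.1 hi).trans_le hnp

theorem exists_mem_diffQuotients_card_pow_three_le {p : ℕ} [CharP F p] (hA : A.Nontrivial)
    (hp : p = 0 ∨ #A ^ 2 ≤ p) :
    ∃ ξ ∈ diffQuotients A, #A ^ 3 ≤ 4 * #(A + A) * #(A + ξ • A) := by
  by_cases hstep : ∃ ξ ∈ diffQuotients A, ξ + 1 ∉ diffQuotients A
  · obtain ⟨ξ, hξ, hξ_add_one⟩ := hstep
    exact ⟨ξ, hξ, card_pow_three_le_of_add_one_notMem_diffQuotients hA.nonempty hξ_add_one⟩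
  push Not at hstep
  have hnatCast (k : ℕ) : (k : F) ∈ diffQuotients A := by
    induction k with
    | zero => simpa using zero_mem_diffQuotients hA
    | succ k ih => simpa using hstep _ ih
  obtain ⟨ξ, hξ, hlarge⟩ := exists_sq_card_le_two_mul_card_add_smul hA.nonempty
    (card_image_natCast_range (R := F) hp).ge
  obtain ⟨k, -, rfl⟩ := mem_image.1 hξ
  refine ⟨k, hnatCast k, ?_⟩
  calc #A ^ 3 = #A * #A ^ 2 := by ring
    _ ≤ #(A + A) * (2 * #(A + (k : F) • A)) :=
        Nat.mul_le_mul (card_le_card_add_right hA.nonempty) hlarge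
    _ = 2 * #(A + A) * #(A + (k : F) • A) := by ring
    _ ≤ 4 * #(A + A) * #(A + (k : F) • A) := by gcongr; norm_num

theorem card_add_div_smul {c d : F} (hd : d ≠ 0) (A : Finset F) :
    #(A + (c / d) • A) = #(d • A + c • A) := by
  rw [← card_smul_finset₀ hd, smul_add, smul_smul, mul_div_cancel₀ c hd]

theorem exists_card_pow_three_le_card_sub_smul_add_sub_smul {p : ℕ} [CharP F p]
    (hA : A.Nonempty) (hp : p = 0 ∨ #A ^ 2 ≤ p) :
    ∃ a₁ ∈ A, ∃ a₂ ∈ A, ∃ b₁ ∈ A, ∃ b₂ ∈ A,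
      #A ^ 3 ≤ 4 * #(A + A) * #((b₁ - b₂) • A + (a₁ - a₂) • A) := by
  obtain ⟨a, rfl⟩ | hA := hA.exists_eq_singleton_or_nontrivial
  · exact ⟨a, by simp, a, by simp, a, by simp, a, by simp, by simp⟩
  obtain ⟨ξ, hξ, hlarge⟩ := exists_mem_diffQuotients_card_pow_three_le hA hp
  obtain ⟨a₁, ha₁, a₂, ha₂, b₁, hb₁, b₂, hb₂, hne, rfl⟩ := mem_diffQuotients.1 hξ
  rw [card_add_div_smul (sub_ne_zero.2 hne)] at hlarge
  exact ⟨a₁, ha₁, a₂, ha₂, b₁, hb₁, b₂, hb₂, hlarge⟩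

end DifferenceQuotients

section SumProduct

variable {F : Type*} [Field F] [DecidableEq F] {A A₁ : Finset F} {b : F} {N : ℕ}

theorem card_sub_smul_add_sub_smul_mul_le {a₁ a₂ b₁ b₂ : F} (hA : A.Nonempty) (hb : b ≠ 0)
    (ha₁ : N ≤ #(a₁ • A ∩ b • A)) (ha₂ : N ≤ #(a₂ • A ∩ b • A))
    (hb₁ : N ≤ #(b₁ • A ∩ b • A)) (hb₂ : N ≤ #(b₂ • A ∩ b • A)) :
    #((b₁ - b₂) • A + (a₁ - a₂) • A) * N ^ 4 * #A ^ 3 ≤ 256 * #(A + A) ^ 8 := by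
  let B : Fin 4 → Finset F := ![b₁ • A, -(b₂ • A), a₁ • A, -(a₂ • A)]
  have hsubset : (b₁ - b₂) • A + (a₁ - a₂) • A ⊆ ∑ i, B i := by
    rw [Fin.sum_univ_four, add_assoc (B 0 + B 1)]
    exact add_subset_add (sub_smul_finset_subset b₁ b₂ A) (sub_smul_finset_subset a₁ a₂ A)
  have hsmall : ∀ i, #(b • A + B i) * N ≤ #(A + A) ^ 2 := by
    simp only [Fin.forall_fin_succ, IsEmpty.forall_iff, and_true]
    exact ⟨card_smul_add_smul_mul_le hb₁, card_smul_add_neg_smul_mul_le hb₂,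
      card_smul_add_smul_mul_le ha₁, card_smul_add_neg_smul_mul_le ha₂⟩
  have hplunnecke : #(∑ i, B i) * #A ^ 4 ≤ (∑ i, #(b • A + B i)) ^ 4 * #A := by
    simpa only [card_smul_finset₀ hb, card_univ, Fintype.card_fin] using
      card_sum_mul_card_pow_le (hA.smul_finset (a := b)) univ B
  refine Nat.le_of_mul_le_mul_right ?_ hA.card_pos
  calc #((b₁ - b₂) • A + (a₁ - a₂) • A) * N ^ 4 * #A ^ 3 * #A
      ≤ #(∑ i, B i) * N ^ 4 * #A ^ 3 * #A := by gcongr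
    _ = #(∑ i, B i) * #A ^ 4 * N ^ 4 := by ring
    _ ≤ (∑ i, #(b • A + B i)) ^ 4 * #A * N ^ 4 := by gcongr
    _ = (∑ i, #(b • A + B i) * N) ^ 4 * #A := by rw [← sum_mul]; ring
    _ ≤ (∑ _i : Fin 4, #(A + A) ^ 2) ^ 4 * #A := by gcongr with i; exact hsmall i
    _ = 256 * #(A + A) ^ 8 * #A := by simp only [sum_const, card_univ, Fintype.card_fin]; ring

theorem card_pow_three_mul_pow_four_mul_card_pow_three_le {p : ℕ} [CharP F p] (hb : b ≠ 0)
    (hp : p = 0 ∨ #A ^ 2 ≤ p) (hA₁ : A₁ ⊆ A) (hN : ∀ a ∈ A₁, N ≤ #(a • A ∩ b • A)) :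
    #A₁ ^ 3 * N ^ 4 * #A ^ 3 ≤ 1024 * #(A + A) ^ 9 := by
  obtain rfl | hA₁_nonempty := A₁.eq_empty_or_nonempty
  · simp
  have hp₁ : p = 0 ∨ #A₁ ^ 2 ≤ p :=
    hp.imp_right (Nat.pow_le_pow_left (card_le_card hA₁) 2).trans
  obtain ⟨a₁, ha₁, a₂, ha₂, b₁, hb₁, b₂, hb₂, hlarge⟩ :=
    exists_card_pow_three_le_card_sub_smul_add_sub_smul hA₁_nonempty hp₁
  calc #A₁ ^ 3 * N ^ 4 * #A ^ 3
      ≤ 4 * #(A₁ + A₁) * #((b₁ - b₂) • A₁ + (a₁ - a₂) • A₁) * N ^ 4 * #A ^ 3 := by gcongr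
    _ ≤ 4 * #(A + A) * #((b₁ - b₂) • A + (a₁ - a₂) • A) * N ^ 4 * #A ^ 3 := by gcongr
    _ = 4 * #(A + A) * (#((b₁ - b₂) • A + (a₁ - a₂) • A) * N ^ 4 * #A ^ 3) := by ring
    _ ≤ 4 * #(A + A) * (256 * #(A + A) ^ 8) := Nat.mul_le_mul_left _ <|
        card_sub_smul_add_sub_smul_mul_le (hA₁_nonempty.mono hA₁) hb
          (hN _ ha₁) (hN _ ha₂) (hN _ hb₁) (hN _ hb₂)
    _ = 1024 * #(A + A) ^ 9 := by ring

theorem card_pow_fourteen_le {p : ℕ} [CharP F p] (hp : p = 0 ∨ #A ^ 2 ≤ p) (h0 : 0 ∉ A) :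
    (#A : ℝ) ^ 14 ≤ 1024 * (1 + Real.log #A) ^ 4 * #(A + A) ^ 9 * #(A * A) ^ 4 := by
  obtain rfl | hA := A.eq_empty_or_nonempty
  · simp
  obtain ⟨b, hbA, henergy⟩ :=
    exists_card_mul_sq_card_le_card_mul_sum_card_smul_inter_smul hA h0 A
  obtain ⟨N, hlayer⟩ : ∃ N : ℕ, (∑ a ∈ A, #(a • A ∩ b • A) : ℝ) ≤
      N * #{a ∈ A | N ≤ #(a • A ∩ b • A)} * (1 + Real.log #A) :=
    exists_sum_le_mul_card_filter_mul_one_add_log fun a _ ↦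
      (card_le_card inter_subset_left).trans card_smul_finset_le
  set A₁ := {a ∈ A | N ≤ #(a • A ∩ b • A)}
  have hA₁ : A₁ ⊆ A := filter_subset _ _
  have hpopular : (#A₁ : ℝ) ^ 3 * N ^ 4 * #A ^ 3 ≤ 1024 * #(A + A) ^ 9 :=
    mod_cast card_pow_three_mul_pow_four_mul_card_pow_three_le (ne_of_mem_of_not_mem hbA h0) hp hA₁
      fun a ha ↦ (mem_filter.1 ha).2
  have hcube : (#A : ℝ) ^ 3 ≤ #(A * A) * (N * #A₁ * (1 + Real.log #A)) :=
    calc (#A : ℝ) ^ 3 = #A * #A ^ 2 := by ring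
      _ ≤ #(A * A) * ∑ a ∈ A, (#(a • A ∩ b • A) : ℝ) := mod_cast henergy
      _ ≤ #(A * A) * (N * #A₁ * (1 + Real.log #A)) := by gcongr
  set L := 1 + Real.log #A
  calc (#A : ℝ) ^ 14 = (#A ^ 3) ^ 4 * #A ^ 2 := by ring
    _ ≤ (#(A * A) * (N * #A₁ * L)) ^ 4 * #A ^ 2 := by gcongr
    _ = L ^ 4 * #(A * A) ^ 4 * (#A₁ ^ 3 * N ^ 4 * #A ^ 2 * #A₁) := by ring
    _ ≤ L ^ 4 * #(A * A) ^ 4 * (#A₁ ^ 3 * N ^ 4 * #A ^ 2 * #A) := by gcongr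
    _ = L ^ 4 * #(A * A) ^ 4 * (#A₁ ^ 3 * N ^ 4 * #A ^ 3) := by ring
    _ ≤ L ^ 4 * #(A * A) ^ 4 * (1024 * #(A + A) ^ 9) := by gcongr
    _ = 1024 * L ^ 4 * #(A + A) ^ 9 * #(A * A) ^ 4 := by ring

theorem rpow_fourteen_div_thirteen_div_log_rpow_le {n x : ℝ} (hn : 2 ≤ n) (hx : 0 ≤ x)
    (h : n ^ 14 ≤ 1024 * (1 + Real.log n) ^ 4 * x ^ 13) :
    1 / 4 * n ^ ((14 : ℝ) / 13) / Real.log n ^ ((4 : ℝ) / 13) ≤ x := by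
  have hlog : 1 / 2 < Real.log n := by
    linarith [Real.log_two_gt_d9, Real.log_le_log two_pos hn]
  have hlog_pos : 0 < Real.log n := by linarith
  have hpow_n : (n ^ ((14 : ℝ) / 13)) ^ 13 = n ^ 14 := by
    rw [← Real.rpow_mul_natCast (by linarith), ← Real.rpow_natCast]
    norm_num
  have hpow_log : (Real.log n ^ ((4 : ℝ) / 13)) ^ 13 = Real.log n ^ 4 := by
    rw [← Real.rpow_mul_natCast hlog_pos.le, ← Real.rpow_natCast]
    norm_num
  refine le_of_pow_le_pow_left₀ (n := 13) (by norm_num) hx ?_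
  rw [div_pow, mul_pow, hpow_n, hpow_log, div_le_iff₀ (by positivity)]
  calc (1 / 4) ^ 13 * n ^ 14
      ≤ (1 / 4) ^ 13 * (1024 * (1 + Real.log n) ^ 4 * x ^ 13) := by gcongr
    _ ≤ (1 / 4) ^ 13 * (1024 * (3 * Real.log n) ^ 4 * x ^ 13) := by gcongr; linarith
    _ = (1 / 4) ^ 13 * 82944 * (x ^ 13 * Real.log n ^ 4) := by ring
    _ ≤ 1 * (x ^ 13 * Real.log n ^ 4) := by gcongr; norm_num
    _ = x ^ 13 * Real.log n ^ 4 := one_mul _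

theorem sum_product_14_13_general (p : ℕ) [CharP F p] (hp : p = 0 ∨ #A ^ 2 ≤ p) (h2 : 2 ≤ #A)
    (h0 : 0 ∉ A) :
    1 / 4 * (#A : ℝ) ^ ((14 : ℝ) / 13) / Real.log #A ^ ((4 : ℝ) / 13) ≤
      max (#(A + A) : ℝ) (#(A * A) : ℝ) := by
  set x : ℝ := max (#(A + A) : ℝ) (#(A * A) : ℝ)
  have hadd : (#(A + A) : ℝ) ≤ x := le_max_left _ _
  have hmul : (#(A * A) : ℝ) ≤ x := le_max_right _ _
  have hx : 0 ≤ x := (Nat.cast_nonneg _).trans hadd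
  refine rpow_fourteen_div_thirteen_div_log_rpow_le (mod_cast h2) hx ?_
  calc (#A : ℝ) ^ 14 ≤ 1024 * (1 + Real.log #A) ^ 4 * #(A + A) ^ 9 * #(A * A) ^ 4 :=
        card_pow_fourteen_le hp h0
    _ ≤ 1024 * (1 + Real.log #A) ^ 4 * x ^ 9 * x ^ 4 := by gcongr
    _ = 1024 * (1 + Real.log #A) ^ 4 * x ^ 13 := by ring

end SumProduct

theorem sum_product_14_13 :
    ∃ c : ℝ, 0 < c ∧ ∃ α : ℝ, 0 ≤ α ∧
      ∀ (p : ℕ), p.Prime → ∀ (A : Finset (ZMod p)),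
        2 ≤ A.card → A.card ^ 2 < p → (0 : ZMod p) ∉ A →
        c * (A.card : ℝ) ^ ((14 : ℝ) / 13) / (Real.log A.card) ^ α ≤
          max ((A + A).card : ℝ) ((A * A).card : ℝ) := by
  refine ⟨1 / 4, by norm_num, 4 / 13, by norm_num, fun p hprime A h2 hp h0 ↦ ?_⟩
  have : Fact p.Prime := ⟨hprime⟩
  exact sum_product_14_13_general p (.inr hp.le) h2 h0
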